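/- arXiv:1403.1017 — 4 statements merged into one kernel-verified Lean document; each statement's English description precedes it below -/
import Mathlib

section
/- The bilinear form κ_b on b is symmetric and invariant: for all x, y, z ∈ b one has κ_b(x,y) = κ_b(y,x) and κ_b([x,y], z) = κ_b(x, [y,z]). -/
/-!
For `x ∈ b` let `A x` be the compression of `ad x` to `g₀`, i.e. `p₀ ∘ ad x` restricted to `g₀`.
On `b` the projection `p₀` is multiplicative (`pzero_mul`): in a diagonal block of a product of two
block lower triangular matrices only the diagonal blocks of the factors contribute. Hence
`p₀ ∘ ad x ∘ p₀ = p₀ ∘ ad x` on `b`, so that `p₀ ∘ ad x ∘ ad y` restricts to `A x ∘ A y` on `g₀`, and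
`A [x, y] = [A x, A y]`: the compression is a representation of `b` on `g₀`.
Thus the last two terms of `κ_b` are, up to a factor, trace forms of representations of `b`
on `g` and on `g₀`; these are symmetric and invariant by cyclicity of the trace, and so is the
first term.
-/

/- We realize `g = gl_N(ℂ)` (with `N = n·l`) as matrices indexed by `Fin l × Fin n`,
via the identification `e_{ij} ⊗ e_{pq} ↦ e_{(i−1)n+p,(j−1)n+q}`, i.e. the row index
`(i-1)n+p` corresponds to the pair `(i,p)` and similarly for columns.  The ℤ-grading is
given by `deg e_{(i,p),(j,q)} = j − i`. -/

/-- The adjoint endomorphism `ad x : y ↦ x*y − y*x`. -/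
noncomputable def adG (n l : ℕ)
    (x : Matrix (Fin l × Fin n) (Fin l × Fin n) ℂ) :
    Matrix (Fin l × Fin n) (Fin l × Fin n) ℂ →ₗ[ℂ]
      Matrix (Fin l × Fin n) (Fin l × Fin n) ℂ :=
  LinearMap.mulLeft ℂ x - LinearMap.mulRight ℂ x

/-- The projection `p₀ : g → g` onto the degree-zero component `g₀`
(killing all entries outside the diagonal blocks). -/
def pzero (n l : ℕ) :
    Matrix (Fin l × Fin n) (Fin l × Fin n) ℂ →ₗ[ℂ]
      Matrix (Fin l × Fin n) (Fin l × Fin n) ℂ where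
  toFun x := Matrix.of fun a b => if a.1 = b.1 then x a b else 0
  map_add' x y := by
    ext a b
    by_cases h : a.1 = b.1 <;> simp [h]
  map_smul' c x := by
    ext a b
    by_cases h : a.1 = b.1 <;> simp [h]

/-- The trace over `g₀` of the restriction to `g₀ = range p₀` of
`p₀ ∘ ad x ∘ ad y`. -/
noncomputable def traceG0 (n l : ℕ)
    (x y : Matrix (Fin l × Fin n) (Fin l × Fin n) ℂ) : ℂ :=
  LinearMap.trace ℂ (LinearMap.range (pzero n l))
    ((pzero n l ∘ₗ adG n l x ∘ₗ adG n l y).restrict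
      (p := LinearMap.range (pzero n l)) (q := LinearMap.range (pzero n l))
      (fun z _ => LinearMap.mem_range.mpr ⟨(adG n l x ∘ₗ adG n l y) z, rfl⟩))

/-- The bilinear form
`κ_b(x,y) = k(tr(xy) − (1/N)tr x tr y) + ½ tr_g(ad x ∘ ad y) − ½ tr_{g₀}(p₀ ∘ ad x ∘ ad y)`. -/
noncomputable def kappaB (n l : ℕ) (k : ℂ)
    (x y : Matrix (Fin l × Fin n) (Fin l × Fin n) ℂ) : ℂ :=
  k * ((x * y).trace - (1 / ((n : ℂ) * (l : ℂ))) * x.trace * y.trace)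
    + (1 / 2) * LinearMap.trace ℂ _ (adG n l x ∘ₗ adG n l y)
    - (1 / 2) * traceG0 n l x y


/-- Membership in `b = ⊕_{d ≤ 0} g_d`: all entries with row-block index strictly
smaller than column-block index (i.e. of positive degree) vanish. -/
def memB (n l : ℕ) (x : Matrix (Fin l × Fin n) (Fin l × Fin n) ℂ) : Prop :=
  ∀ (i j : Fin l) (p q : Fin n), i < j → x (i, p) (j, q) = 0

lemma memB_mul {n l : ℕ} {x y : Matrix (Fin l × Fin n) (Fin l × Fin n) ℂ}
    (hx : memB n l x) (hy : memB n l y) : memB n l (x * y) := by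
  intro i j p q hij
  rw [Matrix.mul_apply]
  refine Finset.sum_eq_zero fun c _ => ?_
  by_cases h : i < c.1
  · rw [hx i c.1 p c.2 h, zero_mul]
  · rw [hy c.1 j c.2 q (lt_of_le_of_lt (not_lt.mp h) hij), mul_zero]

lemma memB_sub {n l : ℕ} {x y : Matrix (Fin l × Fin n) (Fin l × Fin n) ℂ}
    (hx : memB n l x) (hy : memB n l y) : memB n l (x - y) := by
  intro i j p q hij
  rw [Matrix.sub_apply, hx i j p q hij, hy i j p q hij, sub_zero]

lemma memB_pzero {n l : ℕ} (x : Matrix (Fin l × Fin n) (Fin l × Fin n) ℂ) :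
    memB n l (pzero n l x) := by
  intro i j p q hij
  simp [pzero, hij.ne]

lemma pzero_pzero {n l : ℕ} (x : Matrix (Fin l × Fin n) (Fin l × Fin n) ℂ) :
    pzero n l (pzero n l x) = pzero n l x := by
  ext a b
  by_cases h : a.1 = b.1 <;> simp [pzero, h]

lemma adG_apply {n l : ℕ} (x w : Matrix (Fin l × Fin n) (Fin l × Fin n) ℂ) :
    adG n l x w = x * w - w * x := by
  simp [adG]

lemma memB_adG {n l : ℕ} {x w : Matrix (Fin l × Fin n) (Fin l × Fin n) ℂ}
    (hx : memB n l x) (hw : memB n l w) : memB n l (adG n l x w) := by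
  rw [adG_apply]
  exact memB_sub (memB_mul hx hw) (memB_mul hw hx)

lemma adG_commutator {n l : ℕ} (x y : Matrix (Fin l × Fin n) (Fin l × Fin n) ℂ) :
    adG n l (x * y - y * x) = adG n l x * adG n l y - adG n l y * adG n l x := by
  refine LinearMap.ext fun w => ?_
  simp only [LinearMap.sub_apply, Module.End.mul_apply, adG_apply]
  noncomm_ring

lemma pzero_mul {n l : ℕ} {x y : Matrix (Fin l × Fin n) (Fin l × Fin n) ℂ}
    (hx : memB n l x) (hy : memB n l y) :
    pzero n l (x * y) = pzero n l x * pzero n l y := by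
  ext a b
  simp only [pzero, LinearMap.coe_mk, AddHom.coe_mk, Matrix.of_apply, Matrix.mul_apply]
  by_cases hab : a.1 = b.1
  · rw [if_pos hab]
    refine Finset.sum_congr rfl fun c _ => ?_
    rcases lt_trichotomy a.1 c.1 with h | h | h
    · rw [if_neg h.ne, zero_mul, show x a c = 0 from hx a.1 c.1 a.2 c.2 h, zero_mul]
    · rw [if_pos h, if_pos (h.symm.trans hab)]
    · rw [if_neg h.ne', zero_mul,
        show y c b = 0 from hy c.1 b.1 c.2 b.2 (hab ▸ h), mul_zero]
  · rw [if_neg hab]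
    refine (Finset.sum_eq_zero fun c _ => ?_).symm
    by_cases h : a.1 = c.1
    · rw [if_neg (fun h' => hab (h.trans h')), mul_zero]
    · rw [if_neg h, zero_mul]

/-- On `b`, the degree-zero part of `[x, w]` depends on `w` only through its degree-zero part. -/
lemma pzero_adG_pzero {n l : ℕ} {x w : Matrix (Fin l × Fin n) (Fin l × Fin n) ℂ}
    (hx : memB n l x) (hw : memB n l w) :
    pzero n l (adG n l x (pzero n l w)) = pzero n l (adG n l x w) := by
  simp only [adG_apply, map_sub, pzero_mul hx hw, pzero_mul hw hx, pzero_mul hx (memB_pzero w),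
    pzero_mul (memB_pzero w) hx, pzero_pzero]

/-- The compression of `ad x` to `g₀`: the restriction of `p₀ ∘ ad x` to `g₀ = range p₀`. -/
noncomputable def compG0 (n l : ℕ) (x : Matrix (Fin l × Fin n) (Fin l × Fin n) ℂ) :
    Module.End ℂ (LinearMap.range (pzero n l)) :=
  (pzero n l ∘ₗ adG n l x).restrict (fun z _ => LinearMap.mem_range.mpr ⟨adG n l x z, rfl⟩)

lemma coe_compG0 {n l : ℕ} (x : Matrix (Fin l × Fin n) (Fin l × Fin n) ℂ)
    (w : LinearMap.range (pzero n l)) :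
    (compG0 n l x w : Matrix (Fin l × Fin n) (Fin l × Fin n) ℂ) = pzero n l (adG n l x w) :=
  rfl

lemma memB_of_range {n l : ℕ} (w : LinearMap.range (pzero n l)) :
    memB n l (w : Matrix (Fin l × Fin n) (Fin l × Fin n) ℂ) := by
  obtain ⟨_, v, rfl⟩ := w
  exact memB_pzero v

lemma traceG0_eq {n l : ℕ} {x y : Matrix (Fin l × Fin n) (Fin l × Fin n) ℂ}
    (hx : memB n l x) (hy : memB n l y) :
    traceG0 n l x y = LinearMap.trace ℂ _ (compG0 n l x * compG0 n l y) := by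
  unfold traceG0
  congr 1
  refine LinearMap.ext fun w => Subtype.ext ?_
  rw [Module.End.mul_apply, coe_compG0, coe_compG0,
    pzero_adG_pzero hx (memB_adG hy (memB_of_range w))]
  rfl

lemma compG0_commutator {n l : ℕ} {x y : Matrix (Fin l × Fin n) (Fin l × Fin n) ℂ}
    (hx : memB n l x) (hy : memB n l y) :
    compG0 n l (x * y - y * x) = compG0 n l x * compG0 n l y - compG0 n l y * compG0 n l x := by
  refine LinearMap.ext fun w => Subtype.ext ?_
  have hw := memB_of_range w
  simp only [LinearMap.sub_apply, Module.End.mul_apply, AddSubgroupClass.coe_sub, coe_compG0,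
    pzero_adG_pzero hx (memB_adG hy hw), pzero_adG_pzero hy (memB_adG hx hw), adG_commutator,
    map_sub]

/-- Invariance of the trace form on endomorphisms. -/
lemma trace_commutator_mul {M : Type*} [AddCommGroup M] [Module ℂ M] (X Y Z : Module.End ℂ M) :
    LinearMap.trace ℂ M ((X * Y - Y * X) * Z) = LinearMap.trace ℂ M (X * (Y * Z - Z * Y)) := by
  rw [sub_mul, mul_sub, map_sub, map_sub, mul_assoc X, mul_assoc Y, LinearMap.trace_mul_comm ℂ Y,
    mul_assoc X]

/-- The form `κ_b` is symmetric and invariant on `b`: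
`κ_b(x,y) = κ_b(y,x)` and `κ_b([x,y],z) = κ_b(x,[y,z])` for all `x, y, z ∈ b`. -/
theorem kappaB_symm_invariant (n l : ℕ) (hn : 1 ≤ n) (hl : 1 ≤ l) (k : ℂ)
    (x y z : Matrix (Fin l × Fin n) (Fin l × Fin n) ℂ)
    (hx : memB n l x) (hy : memB n l y) (hz : memB n l z) :
    kappaB n l k x y = kappaB n l k y x ∧
    kappaB n l k (x * y - y * x) z = kappaB n l k x (y * z - z * y) := by
  constructor
  · unfold kappaB
    rw [traceG0_eq hx hy, traceG0_eq hy hx, LinearMap.trace_mul_comm ℂ (compG0 n l x),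
      Matrix.trace_mul_comm x y, ← Module.End.mul_eq_comp, ← Module.End.mul_eq_comp,
      LinearMap.trace_mul_comm ℂ (adG n l x)]
    ring
  · have hxy := memB_sub (memB_mul hx hy) (memB_mul hy hx)
    have hyz := memB_sub (memB_mul hy hz) (memB_mul hz hy)
    have h1 : ((x * y - y * x) * z).trace = (x * (y * z - z * y)).trace := by
      rw [sub_mul, mul_sub, Matrix.trace_sub, Matrix.trace_sub, mul_assoc x, mul_assoc y,
        Matrix.trace_mul_comm y, mul_assoc x]
    have h2 : (x * y - y * x).trace = 0 := by
      rw [Matrix.trace_sub, Matrix.trace_mul_comm, sub_self]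
    have h3 : (y * z - z * y).trace = 0 := by
      rw [Matrix.trace_sub, Matrix.trace_mul_comm, sub_self]
    unfold kappaB
    rw [traceG0_eq hxy hz, traceG0_eq hx hyz, compG0_commutator hx hy, compG0_commutator hy hz,
      trace_commutator_mul, h1, h2, h3, ← Module.End.mul_eq_comp, ← Module.End.mul_eq_comp,
      adG_commutator, adG_commutator, trace_commutator_mul]
    ring
end

section
/- The ℤ-grading g = ⊕_d g_d is a good grading for f = f_l ⊗ I_n: the element f lies in g_{−1}, for every integer d ≥ 1 the linear map ad f : g_d → g_{d−1}, x ↦ [f,x], is injective, and for every integer d ≤ 0 the linear map ad f : g_d → g_{d−1} is surjective. -/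
/-!
Write a matrix in blocks `x i j` of size `n × n`. Left multiplication by `f` shifts block rows
down and right multiplication shifts block columns left, so the block `(i, j)` of `[f, x]` is
`x (i-1) j - x i (j+1)`, blocks outside the range being zero (`rectNilp_mul_succ` and the lemmas
after it). Hence `ad f` is a difference operator along each block diagonal.

For `d ≥ 1` the diagonal `j - i = d` starts in block row `0`, where `[f, x] = 0` forces
`x 0 (j+1) = 0`; the recursion `x (i+1) (j+1) = x i j` then propagates zero along it.
For `d ≤ 0` the diagonal starts in block column `0`, and `[f, x] = y` is solved by the recursion
`x (i+1) (j+1) = x i j - y (i+1) j` with initial value `0`. No equation is left over at the end of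
the diagonal, because the blocks of `y` lie strictly below the main diagonal.
-/

/- We realize `g = gl_N(ℂ)` (with `N = n·l`) as matrices indexed by `Fin l × Fin n`,
via the identification `e_{ij} ⊗ e_{pq} ↦ e_{(i−1)n+p,(j−1)n+q}`. -/

/-- The degree-`d` component `g_d` of the ℤ-grading of `g`: the subspace of matrices
supported on the entries `((i,p),(j,q))` with `j − i = d`. -/
noncomputable def gDeg (n l : ℕ) (d : ℤ) :
    Submodule ℂ (Matrix (Fin l × Fin n) (Fin l × Fin n) ℂ) where
  carrier := {x | ∀ a b : Fin l × Fin n, ((b.1 : ℤ) - (a.1 : ℤ)) ≠ d → x a b = 0}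
  add_mem' := by
    intro x y hx hy a b h
    simp [Matrix.add_apply, hx a b h, hy a b h]
  zero_mem' := by
    intro a b _
    rfl
  smul_mem' := by
    intro c x hx a b h
    simp [Matrix.smul_apply, hx a b h]

/-- The rectangular nilpotent `f = f_l ⊗ I_n`. -/
def rectNilp (n l : ℕ) : Matrix (Fin l × Fin n) (Fin l × Fin n) ℂ :=
  Matrix.of fun a b => if (a.1 : ℕ) = (b.1 : ℕ) + 1 ∧ a.2 = b.2 then 1 else 0

lemma rectNilp_mul_zero (n l : ℕ) (x : Matrix (Fin l × Fin n) (Fin l × Fin n) ℂ)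
    (h : 0 < l) (p : Fin n) (b : Fin l × Fin n) :
    (rectNilp n l * x) (⟨0, h⟩, p) b = 0 := by
  simp [Matrix.mul_apply, rectNilp]

lemma rectNilp_mul_succ (n l : ℕ) (x : Matrix (Fin l × Fin n) (Fin l × Fin n) ℂ)
    (i : ℕ) (h : i + 1 < l) (p : Fin n) (b : Fin l × Fin n) :
    (rectNilp n l * x) (⟨i + 1, h⟩, p) b = x (⟨i, by omega⟩, p) b := by
  rw [Matrix.mul_apply, Finset.sum_eq_single (⟨i, by omega⟩, p)]
  · simp [rectNilp]
  · rintro ⟨c, r⟩ _ hc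
    have : ¬ (i = (c : ℕ) ∧ p = r) := by
      rintro ⟨rfl, rfl⟩
      exact hc rfl
    simp [rectNilp, this]
  · simp

lemma mul_rectNilp_lt (n l : ℕ) (x : Matrix (Fin l × Fin n) (Fin l × Fin n) ℂ)
    (j : ℕ) (h : j + 1 < l) (q : Fin n) (a : Fin l × Fin n) :
    (x * rectNilp n l) a (⟨j, by omega⟩, q) = x a (⟨j + 1, h⟩, q) := by
  rw [Matrix.mul_apply, Finset.sum_eq_single (⟨j + 1, h⟩, q)]
  · simp [rectNilp]
  · rintro ⟨c, r⟩ _ hc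
    have : ¬ ((c : ℕ) = j + 1 ∧ r = q) := by
      rintro ⟨h1, rfl⟩
      exact hc (Prod.ext (Fin.ext h1) rfl)
    simp [rectNilp, this]
  · simp

lemma mul_rectNilp_last (n l : ℕ) (x : Matrix (Fin l × Fin n) (Fin l × Fin n) ℂ)
    (j : ℕ) (hj : j < l) (h : ¬ j + 1 < l) (q : Fin n) (a : Fin l × Fin n) :
    (x * rectNilp n l) a (⟨j, hj⟩, q) = 0 := by
  rw [Matrix.mul_apply]
  refine Finset.sum_eq_zero fun c _ => ?_
  have : ¬ ((c.1 : ℕ) = j + 1 ∧ c.2 = q) := by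
    rintro ⟨h1, -⟩
    have := c.1.2
    omega
  simp [rectNilp, this]

/-- The solution of `x (i+1) (j+1) = x i j - y (i+1) j` along block diagonals that vanishes in
block row `0` and block column `0`. -/
def diagSol (y : ℕ → ℕ → ℂ) : ℕ → ℕ → ℂ
  | _, 0 => 0
  | 0, _ + 1 => 0
  | i + 1, j + 1 => diagSol y i j - y (i + 1) j

lemma diagSol_eq_zero (y : ℕ → ℕ → ℂ) (d : ℤ)
    (hy : ∀ i j : ℕ, (j : ℤ) - i ≠ d - 1 → y i j = 0) (i j : ℕ) (h : (j : ℤ) - i ≠ d) :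
    diagSol y i j = 0 := by
  induction i generalizing j with
  | zero => cases j <;> simp [diagSol]
  | succ i ih =>
    cases j with
    | zero => simp [diagSol]
    | succ j =>
      rw [diagSol, ih j (by push_cast at h; omega), hy _ _ (by push_cast at h ⊢; omega), sub_zero]

lemma rectNilp_mem (n l : ℕ) : rectNilp n l ∈ gDeg n l (-1) := by
  intro a b h
  have : ¬ ((a.1 : ℕ) = (b.1 : ℕ) + 1 ∧ a.2 = b.2) := by
    rintro ⟨h1, -⟩
    omega
  simp [rectNilp, this]

lemma gDeg_mul (n l : ℕ) (c d : ℤ) (x y : Matrix (Fin l × Fin n) (Fin l × Fin n) ℂ)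
    (hx : x ∈ gDeg n l c) (hy : y ∈ gDeg n l d) : x * y ∈ gDeg n l (c + d) := by
  intro a b h
  rw [Matrix.mul_apply]
  refine Finset.sum_eq_zero fun k _ => ?_
  by_cases h1 : ((k.1 : ℤ) - (a.1 : ℤ)) = c
  · rw [hy k b (by omega), mul_zero]
  · rw [hx a k h1, zero_mul]

/-- A matrix commuting with `f` vanishes strictly above the block diagonal, by induction on the
block row. -/
lemma eq_zero_of_commute (n l : ℕ) (x : Matrix (Fin l × Fin n) (Fin l × Fin n) ℂ)
    (h : rectNilp n l * x = x * rectNilp n l) (p q : Fin n) (i j : ℕ) (hi : i < l) (hj : j < l)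
    (hij : i < j) : x (⟨i, hi⟩, p) (⟨j, hj⟩, q) = 0 := by
  induction i generalizing j with
  | zero =>
    obtain ⟨j, rfl⟩ : ∃ k, j = k + 1 := ⟨j - 1, by omega⟩
    rw [← mul_rectNilp_lt n l x j hj q, ← h, rectNilp_mul_zero]
  | succ i ih =>
    obtain ⟨j, rfl⟩ : ∃ k, j = k + 1 := ⟨j - 1, by omega⟩
    rw [← mul_rectNilp_lt n l x j hj q, ← h, rectNilp_mul_succ]
    exact ih j _ _ (by omega)

/-- The ℤ-grading `g = ⊕_d g_d` is a good grading for `f = f_l ⊗ I_n`: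
`f ∈ g_{−1}`, `ad f` maps `g_d` into `g_{d−1}`, and `ad f : g_d → g_{d−1}` is
injective for `d ≥ 1` and surjective for `d ≤ 0`. -/
theorem gDeg_good_grading (n l : ℕ) (hn : 1 ≤ n) (hl : 1 ≤ l) :
    rectNilp n l ∈ gDeg n l (-1) ∧
    (∀ (d : ℤ) (x : Matrix (Fin l × Fin n) (Fin l × Fin n) ℂ), x ∈ gDeg n l d →
      rectNilp n l * x - x * rectNilp n l ∈ gDeg n l (d - 1)) ∧
    (∀ d : ℤ, 1 ≤ d →
      ∀ x ∈ gDeg n l d, rectNilp n l * x - x * rectNilp n l = 0 → x = 0) ∧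
    (∀ d : ℤ, d ≤ 0 →
      ∀ y ∈ gDeg n l (d - 1), ∃ x ∈ gDeg n l d,
        rectNilp n l * x - x * rectNilp n l = y) := by
  refine ⟨rectNilp_mem n l, ?_, ?_, ?_⟩
  · intro d x hx
    have h1 := gDeg_mul n l _ _ _ _ (rectNilp_mem n l) hx
    have h2 := gDeg_mul n l _ _ _ _ hx (rectNilp_mem n l)
    rw [neg_add_eq_sub] at h1
    rw [← sub_eq_add_neg] at h2
    exact Submodule.sub_mem _ h1 h2
  · intro d hd x hx h
    ext ⟨⟨i, hi⟩, p⟩ ⟨⟨j, hj⟩, q⟩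
    by_cases hij : i < j
    · exact eq_zero_of_commute n l x (sub_eq_zero.mp h) p q i j hi hj hij
    · exact hx _ _ (by simp only; omega)
  · intro d hd y hy
    -- the entries of `y` at fixed inner indices, extended by zero to all block positions
    let Y : Fin n → Fin n → ℕ → ℕ → ℂ := fun p q i j =>
      if h : i < l ∧ j < l then y (⟨i, h.1⟩, p) (⟨j, h.2⟩, q) else 0
    have hY : ∀ p q, ∀ i j : ℕ, (j : ℤ) - i ≠ d - 1 → Y p q i j = 0 := by
      intro p q i j h
      by_cases hl : i < l ∧ j < l
      · simp only [Y, dif_pos hl]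
        exact hy _ _ h
      · simp only [Y, dif_neg hl]
    have hYy : ∀ p q i j (hi : i < l) (hj : j < l),
        y (⟨i, hi⟩, p) (⟨j, hj⟩, q) = Y p q i j := by
      intro p q i j hi hj
      simp only [Y, dif_pos (And.intro hi hj)]
    have hX := fun p q => diagSol_eq_zero (Y p q) d (hY p q)
    refine ⟨Matrix.of fun a b => diagSol (Y a.2 b.2) a.1 b.1, fun a b h => hX _ _ _ _ h, ?_⟩
    ext ⟨⟨i, hi⟩, p⟩ ⟨⟨j, hj⟩, q⟩
    rw [Matrix.sub_apply, hYy]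
    by_cases hj' : j + 1 < l
    · rw [mul_rectNilp_lt _ _ _ _ hj']
      cases i with
      | zero =>
        rw [rectNilp_mul_zero, hY _ _ _ _ (by push_cast; omega)]
        simp [diagSol]
      | succ i =>
        rw [rectNilp_mul_succ]
        simp [diagSol]
    · -- in the last block column both sides vanish, since `d ≤ 0`
      rw [mul_rectNilp_last _ _ _ _ _ hj', hY _ _ _ _ (by omega)]
      cases i with
      | zero => rw [rectNilp_mul_zero, sub_zero]
      | succ i =>
        rw [rectNilp_mul_succ, sub_zero]
        exact hX _ _ _ _ (by simp only; omega)
end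

section
/- Let R be a (possibly noncommutative) ring, N ≥ 1, and let B = [b_{ij}] be an N×N matrix over R such that b_{i, i+1} = −1 for all 1 ≤ i ≤ N−1 and b_{ij} = 0 whenever j > i + 1 (the entries b_{ij} with j ≤ i are arbitrary). Then the column-determinant of B equals the row-determinant of B: cdet B = rdet B. -/
/-!
Substituting `σ ↦ σ⁻¹` in the row-determinant, the two sides agree term by term: the term of `σ`
multiplies the entries `B (σ j) j`, ordered by column `j` in `cdet` and by row `σ j` in `rdet`.
If `σ j + 1 < j` for some `j`, both products contain a zero. Otherwise every factor with
`σ j < j` is a superdiagonal entry `-1`, which is central, so only the order of the factors with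
`j ≤ σ j` matters, and on these `j` the permutation `σ` is increasing (`lt_of_excedance`): hence
ordering by column and ordering by row give the same product.
-/

/-- The column-determinant of a square matrix over a (possibly noncommutative) ring:
`cdet A = Σ_σ sgn(σ) · a_{σ(1),1} a_{σ(2),2} ⋯ a_{σ(N),N}`, the product taken in the
indicated order. -/
def cdet {R : Type*} [Ring R] {m : ℕ} (A : Matrix (Fin m) (Fin m) R) : R :=
  ∑ σ : Equiv.Perm (Fin m),
    (Equiv.Perm.sign σ : ℤ) • ((List.finRange m).map fun j => A (σ j) j).prod

/-- The row-determinant of a square matrix over a (possibly noncommutative) ring: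
`rdet A = Σ_σ sgn(σ) · a_{1,σ(1)} a_{2,σ(2)} ⋯ a_{N,σ(N)}`, the product taken in the
indicated order. -/
def rdet {R : Type*} [Ring R] {m : ℕ} (A : Matrix (Fin m) (Fin m) R) : R :=
  ∑ σ : Equiv.Perm (Fin m),
    (Equiv.Perm.sign σ : ℤ) • ((List.finRange m).map fun i => A i (σ i)).prod

/-- If `σ` never lowers an index by more than one and `j < k ≤ σ j`, then `σ` lowers `k`.
By counting, the `k` preimages of `{0, …, k - 1}`, which lie in `{0, …, k} \ {j}`, fill that set,
so `k` is one of them. -/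
lemma lt_of_excedance {N : ℕ} (σ : Equiv.Perm (Fin N))
    (hσ : ∀ i : Fin N, (i : ℕ) ≤ (σ i : ℕ) + 1) {j k : Fin N} (hjk : j < k) (hk : k ≤ σ j) :
    σ k < k := by
  have hsub : (Finset.Iio k).map σ.symm.toEmbedding ⊆ (Finset.Iic k).erase j := by
    intro i hi
    simp only [Finset.mem_map, Finset.mem_Iio, Equiv.coe_toEmbedding] at hi
    obtain ⟨a, ha, rfl⟩ := hi
    have h := hσ (σ.symm a)
    rw [Equiv.apply_symm_apply] at h
    simp only [Finset.mem_erase, Finset.mem_Iic]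
    refine ⟨?_, ?_⟩
    · rintro rfl
      rw [Equiv.apply_symm_apply] at hk
      exact absurd ha (not_lt.mpr hk)
    · rw [Fin.le_def]
      rw [Fin.lt_def] at ha
      omega
  have heq := Finset.eq_of_subset_of_card_le hsub (by
    rw [Finset.card_erase_of_mem (Finset.mem_Iic.mpr hjk.le), Finset.card_map]
    simp)
  have hmem : k ∈ (Finset.Iic k).erase j := by simp [hjk.ne']
  rw [← heq] at hmem
  simp only [Finset.mem_map, Finset.mem_Iio, Equiv.coe_toEmbedding] at hmem
  obtain ⟨a, ha, h⟩ := hmem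
  rwa [← h, Equiv.apply_symm_apply, h]

/-- Factors equal to `-1` can be pulled out of an ordered product. -/
lemma prod_map_eq_filter {R α : Type*} [Ring R] (g : α → R) (p : α → Prop) [DecidablePred p]
    (l : List α) (h : ∀ a ∈ l, ¬ p a → g a = -1) :
    (l.map g).prod =
      (-1) ^ (l.filter fun a => ¬ p a).length * ((l.filter fun a => p a).map g).prod := by
  induction l with
  | nil => simp
  | cons a l ih =>
    have ih' := ih fun b hb => h b (List.mem_cons_of_mem _ hb)
    by_cases hp : p a
    · simp only [List.map_cons, List.prod_cons, ih', hp, List.filter_cons, not_true_eq_false,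
        decide_false, decide_true, if_true, Bool.false_eq_true, if_false]
      rw [← mul_assoc, ← mul_assoc, ((Commute.neg_one_right (g a)).pow_right _).eq]
    · simp [ih', hp, h a List.mem_cons_self hp, pow_succ']

/-- The term of `σ` in the column-determinant equals the term of `σ⁻¹` in the row-determinant. -/
lemma term_eq {R : Type*} [Ring R] (N : ℕ)
    (B : Matrix (Fin N) (Fin N) R)
    (hsuper : ∀ (i : Fin N) (h : (i : ℕ) + 1 < N), B i ⟨(i : ℕ) + 1, h⟩ = -1)
    (hupper : ∀ i j : Fin N, (i : ℕ) + 1 < (j : ℕ) → B i j = 0) (σ : Equiv.Perm (Fin N)) :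
    ((List.finRange N).map fun j => B (σ j) j).prod =
      ((List.finRange N).map fun i => B i (σ⁻¹ i)).prod := by
  by_cases hσ : ∀ i : Fin N, (i : ℕ) ≤ (σ i : ℕ) + 1
  · have hg : ∀ j, ¬ j ≤ σ j → B (σ j) j = -1 := by
      intro j hj
      have h1 := hσ j
      rw [Fin.le_def] at hj
      have h2 : (σ j : ℕ) + 1 = j := by omega
      have h3 := hsuper (σ j) (by omega)
      rwa [show (⟨(σ j : ℕ) + 1, by omega⟩ : Fin N) = j from Fin.ext h2] at h3
    have hinv : ∀ a, σ (σ⁻¹ a) = a := σ.apply_symm_apply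
    have hperm : ((List.finRange N).map ⇑σ⁻¹).Perm (List.finRange N) :=
      Equiv.Perm.map_finRange_perm σ⁻¹
    -- The row-ordered product is the product of the same factors over a reordered list of columns.
    have hr : ((List.finRange N).map fun i => B i (σ⁻¹ i)) =
        ((List.finRange N).map ⇑σ⁻¹).map fun j => B (σ j) j := by
      simp [List.map_map, Function.comp_def]
    rw [hr, prod_map_eq_filter _ (fun j => j ≤ σ j) _ fun j _ => hg j,
      prod_map_eq_filter _ (fun j => j ≤ σ j) ((List.finRange N).map ⇑σ⁻¹) fun j _ => hg j,
      (hperm.filter _).length_eq]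
    congr 3
    refine List.Perm.eq_of_pairwise (le := (· < ·)) ?_ ?_ ?_ (hperm.filter _).symm
    · intro a b _ _ hab hba
      exact absurd hab hba.asymm
    · exact (List.pairwise_lt_finRange N).filter _
    · rw [List.pairwise_filter, List.pairwise_map]
      refine (List.pairwise_lt_finRange N).imp ?_
      intro a b hab ha hb
      simp only [decide_eq_true_eq, hinv] at ha hb
      by_contra hlt
      have hne : σ⁻¹ b ≠ σ⁻¹ a := fun h => hab.ne' (σ⁻¹.injective h)
      have hlt' : σ⁻¹ b < σ⁻¹ a := lt_of_le_of_ne (not_lt.mp hlt) hne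
      have := lt_of_excedance σ hσ hlt' (by
        rw [hinv]; exact ha.trans hab.le)
      rw [hinv] at this
      exact absurd this (not_lt.mpr ha)
  · push Not at hσ
    obtain ⟨j, hj⟩ := hσ
    have h0 := hupper (σ j) j hj
    have h1 : B (σ j) (σ⁻¹ (σ j)) = 0 := by simpa using h0
    trans (0 : R)
    · exact List.prod_eq_zero (List.mem_map.mpr ⟨j, List.mem_finRange j, h0⟩)
    · symm
      exact List.prod_eq_zero (List.mem_map.mpr ⟨σ j, List.mem_finRange _, h1⟩)

/-- If `B` has entries `−1` on the superdiagonal and `0` strictly above it (the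
entries on or below the diagonal being arbitrary), then `cdet B = rdet B`. -/
theorem cdet_eq_rdet {R : Type*} [Ring R] (N : ℕ) (hN : 1 ≤ N)
    (B : Matrix (Fin N) (Fin N) R)
    (hsuper : ∀ (i : Fin N) (h : (i : ℕ) + 1 < N), B i ⟨(i : ℕ) + 1, h⟩ = -1)
    (hupper : ∀ i j : Fin N, (i : ℕ) + 1 < (j : ℕ) → B i j = 0) :
    cdet B = rdet B := by
  unfold cdet rdet
  refine Fintype.sum_equiv (Equiv.inv _) _ _ fun σ => ?_
  rw [Equiv.inv_apply, Equiv.Perm.sign_inv, term_eq N B hsuper hupper σ]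
end

section
/- Let R be a (possibly noncommutative) ring, N ≥ 1, and let B = [b_{ij}] be an N×N matrix over R such that b_{i, i+1} = −1 for all 1 ≤ i ≤ N−1 and b_{ij} = 0 whenever j > i + 1 (the entries b_{ij} with j ≤ i are arbitrary). For 0 ≤ p ≤ N let B^{(p)} denote the trailing p×p principal submatrix of B (the submatrix on rows and columns N−p+1, …, N), with the convention cdet B^{(0)} = 1. Then the first-column expansion holds: cdet B = Σ_{i=1}^{N} b_{i,1} · cdet B^{(N−i)}. -/
/-- The trailing `p×p` principal submatrix `B^{(p)}` of an `N×N` matrix `B`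
(the submatrix on the last `p` rows and columns). -/
def trailing {R : Type*} [Ring R] {N : ℕ} (p : ℕ) (hp : p ≤ N)
    (B : Matrix (Fin N) (Fin N) R) : Matrix (Fin p) (Fin p) R :=
  B.submatrix (fun a => ⟨N - p + (a : ℕ), by have := a.2; omega⟩)
    (fun a => ⟨N - p + (a : ℕ), by have := a.2; omega⟩)

/-- Permuting rows only reindexes the sum over permutations; the order of the factors is given by
the columns and does not change. -/
theorem cdet_permute_rows {R : Type*} [Ring R] {m : ℕ} (π : Equiv.Perm (Fin m))
    (A : Matrix (Fin m) (Fin m) R) :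
    cdet (A.submatrix π id) = (Equiv.Perm.sign π : ℤ) • cdet A := by
  unfold cdet
  rw [Finset.smul_sum]
  refine Fintype.sum_equiv (Equiv.mulLeft π) _ _ fun σ => ?_
  have h : ((Equiv.Perm.sign π : ℤ)) * (Equiv.Perm.sign π : ℤ) = 1 := by
    rw [← Units.val_mul, Int.units_mul_self, Units.val_one]
  simp only [Equiv.coe_mulLeft, map_mul, Units.val_mul, smul_smul, ← mul_assoc, h, one_mul]
  rfl

theorem cdet_eq_zero_of_row_eq_zero {R : Type*} [Ring R] {m : ℕ}
    (A : Matrix (Fin m) (Fin m) R) (i : Fin m) (h : ∀ j, A i j = 0) : cdet A = 0 := by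
  unfold cdet
  refine Finset.sum_eq_zero fun σ _ => ?_
  rw [List.prod_eq_zero, smul_zero]
  exact List.mem_map.2 ⟨σ.symm i, List.mem_finRange _, by simp [h]⟩

/-- Laplace expansion along the first column, whose entries are the leftmost factors. -/
theorem cdet_succ_column_zero {R : Type*} [Ring R] {n : ℕ}
    (A : Matrix (Fin (n + 1)) (Fin (n + 1)) R) :
    cdet A = ∑ i : Fin (n + 1),
      A i 0 * ((-1) ^ (i : ℕ) * cdet (A.submatrix i.succAbove Fin.succ)) := by
  -- Fixing `σ 0 = i`, the remaining rows appear in the order `swap 0 i ∘ succ`.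
  have key : cdet A = ∑ i : Fin (n + 1), A i 0 * ((if i = 0 then (1 : ℤ) else -1) •
      cdet (A.submatrix (fun a => Equiv.swap 0 i a.succ) Fin.succ)) := by
    unfold cdet
    rw [← Equiv.sum_comp Equiv.Perm.decomposeFin.symm, Fintype.sum_prod_type]
    refine Finset.sum_congr rfl fun i _ => ?_
    rw [Finset.smul_sum, Finset.mul_sum]
    refine Finset.sum_congr rfl fun σ _ => ?_
    rw [List.finRange_succ, Equiv.Perm.decomposeFin.symm_sign]
    simp only [List.map_cons, List.prod_cons, List.map_map, Function.comp_def,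
      Equiv.Perm.decomposeFin_symm_apply_zero, Equiv.Perm.decomposeFin_symm_apply_succ,
      Matrix.submatrix_apply, smul_smul, mul_smul_comm]
    split_ifs <;> simp
  rw [key]
  refine Finset.sum_congr rfl fun i _ => ?_
  congr 1
  refine Fin.cases ?_ (fun i => ?_) i
  · simp
  -- The rows `swap 0 (i+1) ∘ succ` become increasing after a cycle of length `i + 1`.
  · have h : A.submatrix i.succ.succAbove Fin.succ =
        (A.submatrix (fun a => Equiv.swap 0 i.succ a.succ) Fin.succ).submatrix
          i.cycleRange.symm id := by
      ext a b
      have := Fin.succAbove_cycleRange i (i.cycleRange.symm a)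
      rw [Equiv.apply_symm_apply] at this
      simp [this]
    rw [h, cdet_permute_rows, Equiv.Perm.sign_symm, Fin.sign_cycleRange]
    rw [if_neg (Fin.succ_ne_zero i), Fin.val_succ, pow_succ]
    rcases Nat.even_or_odd (i : ℕ) with h2 | h2 <;> simp [h2.neg_one_pow]

/-- A first row that vanishes off the diagonal can be split off. -/
theorem cdet_eq_of_row_zero {R : Type*} [Ring R] {n : ℕ}
    (A : Matrix (Fin (n + 1)) (Fin (n + 1)) R) (h : ∀ j : Fin n, A 0 j.succ = 0) :
    cdet A = A 0 0 * cdet (A.submatrix Fin.succ Fin.succ) := by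
  rw [cdet_succ_column_zero, Fin.sum_univ_succ, Finset.sum_eq_zero, add_zero]
  · simp
  · intro i _
    have : NeZero n := ⟨by have := i.2; omega⟩
    rw [cdet_eq_zero_of_row_eq_zero _ 0, mul_zero, mul_zero]
    intro j
    simp [h]

/-- Deleting row `i` and column `0` from a Hessenberg matrix leaves, up to the sign `(-1)^i`, the
column-determinant of the trailing principal submatrix of size `p = n - i`. -/
theorem cdet_minor {R : Type*} [Ring R] (n : ℕ) (B : Matrix (Fin (n + 1)) (Fin (n + 1)) R)
    (hsuper : ∀ i j : Fin (n + 1), (i : ℕ) + 1 = j → B i j = -1)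
    (hupper : ∀ i j : Fin (n + 1), (i : ℕ) + 1 < j → B i j = 0)
    (i : Fin (n + 1)) (p : ℕ) (hp : p ≤ n + 1) (hip : (i : ℕ) + p = n) :
    (-1) ^ (i : ℕ) * cdet (B.submatrix i.succAbove Fin.succ) = cdet (trailing p hp B) := by
  induction n generalizing p with
  | zero =>
    obtain rfl : i = 0 := Fin.fin_one_eq_zero i
    obtain rfl : p = 0 := by simpa using hip
    simp [cdet]
  | succ n ih =>
    refine Fin.cases (fun hip => ?_) (fun i hip => ?_) i hip
    · obtain rfl : p = n + 1 := by simpa using hip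
      simp only [Fin.val_zero, pow_zero, one_mul]
      congr 1
      ext a b
      simp only [trailing, Matrix.submatrix_apply, Fin.succAbove_zero]
      congr 1 <;> ext <;> simp <;> omega
    · rw [Fin.val_succ] at hip
      have hC := ih (B.submatrix Fin.succ Fin.succ)
        (fun a b hab => hsuper _ _ (by simpa using hab))
        (fun a b hab => hupper _ _ (by simpa using hab)) i p (by omega) (by omega)
      have ht : trailing p (by omega) (B.submatrix Fin.succ Fin.succ) = trailing p hp B := by
        ext a b
        simp only [trailing, Matrix.submatrix_apply]
        congr 1 <;> ext <;> simp <;> omega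
      rw [ht] at hC
      rw [← hC, cdet_eq_of_row_zero]
      · have h0 : B 0 (Fin.succ 0) = -1 := hsuper _ _ (by simp)
        have hM : (B.submatrix i.succ.succAbove Fin.succ).submatrix Fin.succ Fin.succ =
            (B.submatrix Fin.succ Fin.succ).submatrix i.succAbove Fin.succ := by
          ext a b
          simp
        rw [hM, Matrix.submatrix_apply, Fin.succ_succAbove_zero, h0, Fin.val_succ, pow_succ]
        simp
      · intro j
        rw [Matrix.submatrix_apply, Fin.succ_succAbove_zero]
        exact hupper _ _ (by simp)

/-- First-column expansion of the column-determinant: if `B` has entries `−1` on the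
superdiagonal and `0` strictly above it, then
`cdet B = Σ_{i=1}^{N} b_{i,1} · cdet B^{(N−i)}` (with `cdet B^{(0)} = 1`, which holds
by definition for the empty matrix). -/
theorem cdet_first_column_expansion {R : Type*} [Ring R] (N : ℕ) (hN : 0 < N)
    (B : Matrix (Fin N) (Fin N) R)
    (hsuper : ∀ (i : Fin N) (h : (i : ℕ) + 1 < N), B i ⟨(i : ℕ) + 1, h⟩ = -1)
    (hupper : ∀ i j : Fin N, (i : ℕ) + 1 < (j : ℕ) → B i j = 0) :
    cdet B =
      ∑ i : Fin N,
        B i ⟨0, hN⟩ * cdet (trailing (N - 1 - (i : ℕ)) (by omega) B) := by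
  obtain ⟨n, rfl⟩ : ∃ n, N = n + 1 := ⟨N - 1, by omega⟩
  rw [cdet_succ_column_zero]
  refine Finset.sum_congr rfl fun i _ => ?_
  rw [cdet_minor n B (fun a b hab => ?_) hupper i (n + 1 - 1 - (i : ℕ)) (by omega) (by omega)]
  · rfl
  · have hb : b = ⟨(a : ℕ) + 1, by omega⟩ := Fin.ext hab.symm
    rw [hb]
    exact hsuper a _
end
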